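/- arXiv:2305.13151 — 2 statements merged into one kernel-verified Lean document; each statement's English description precedes it below -/
import Mathlib

section
/- For every integer n ≥ 1, p^{ed}_{od}(n) - p^{ed}_{od}(n-1) = 2·D_e(n-1) − D_o(n-1) (an identity of integers). -/
/-- Number of partitions of `n` into distinct parts in which
every odd part is smaller than every even part and at least one odd part occurs. -/
noncomputable def pedOd (n : ℕ) : ℕ :=
  Nat.card {π : n.Partition // π.parts.Nodup ∧
    (∀ a ∈ π.parts, ∀ b ∈ π.parts, Odd a → Even b → a < b) ∧
    (∃ a ∈ π.parts, Odd a)}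

/-- Number of partitions of `n` into distinct odd parts (`Dodd 0 = 1`). -/
noncomputable def Dodd (n : ℕ) : ℕ :=
  Nat.card {π : n.Partition // π.parts.Nodup ∧ ∀ a ∈ π.parts, Odd a}

/-- Number of partitions of `n` into distinct even parts (`Deven 0 = 1`). -/
noncomputable def Deven (n : ℕ) : ℕ :=
  Nat.card {π : n.Partition // π.parts.Nodup ∧ ∀ a ∈ π.parts, Even a}

open Polynomial in
/-- Generating polynomial for the subsets of `S` satisfying `Q`, by sum. -/
noncomputable def genP (S : Finset ℕ) (Q : Finset ℕ → Prop) : Polynomial ℤ :=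
  open Classical in ∑ t ∈ S.powerset.filter Q, X ^ (t.sum id)

theorem card_eq_coeff (n : ℕ) (S : Finset ℕ) (Q : Finset ℕ → Prop)
    (h0 : 0 ∉ S) (hS : ∀ i, 1 ≤ i → i ≤ n → i ∈ S) :
    (Nat.card {π : n.Partition // π.parts.Nodup ∧ Q π.parts.toFinset} : ℤ)
      = (genP S Q).coeff n := by
  classical
  have h1 : (genP S Q).coeff n
      = (((S.powerset.filter Q).filter (fun t => n = t.sum id)).card : ℤ) := by
    rw [genP, Polynomial.finsetSum_coeff]
    simp only [Polynomial.coeff_X_pow]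
    rw [Finset.sum_boole]
  rw [h1, ← Nat.card_eq_finsetCard]
  congr 1
  refine Nat.card_congr (Equiv.ofBijective
    (fun π => ⟨π.1.parts.toFinset, ?_⟩) ⟨?_, ?_⟩)
  · obtain ⟨π, hd, hQ⟩ := π
    simp only [Finset.mem_filter, Finset.mem_powerset]
    refine ⟨⟨fun i hi => ?_, hQ⟩, ?_⟩
    · rw [Multiset.mem_toFinset] at hi
      exact hS i (π.parts_pos hi)
        (π.parts_sum ▸ Multiset.single_le_sum (fun _ _ => Nat.zero_le _) _ hi)
    · rw [Finset.sum, Multiset.toFinset_val, hd.dedup, Multiset.map_id, π.parts_sum]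
  · rintro ⟨π, hd, hQ⟩ ⟨π', hd', hQ'⟩ h
    have h2 := congrArg (fun z => z.1.val) h
    simp only [Multiset.toFinset_val, hd.dedup, hd'.dedup] at h2
    exact Subtype.ext (Nat.Partition.ext h2)
  · rintro ⟨t, ht⟩
    simp only [Finset.mem_filter, Finset.mem_powerset] at ht
    refine ⟨⟨⟨t.val, fun {i} hi => ?_, ?_⟩, t.nodup, ?_⟩, ?_⟩
    · exact Nat.pos_of_ne_zero fun h => h0 (ht.1.1 (h ▸ hi))
    · rw [ht.2, Finset.sum, Multiset.map_id]
    · simpa using ht.1.2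
    · exact Subtype.ext (by simp)

def aset (N m : ℕ) : Finset ℕ :=
  (Finset.Icc 1 (2 * N)).filter (fun i => (Odd i ∧ i < 2 * m) ∨ (Even i ∧ 2 * m < i))

def bset (N m : ℕ) : Finset ℕ :=
  (Finset.Icc 1 (2 * N)).filter (fun i => (Odd i ∧ i < 2 * m) ∨ (Even i ∧ 2 * m + 2 < i))

open Polynomial in
noncomputable def apoly (N m : ℕ) : Polynomial ℤ := ∏ i ∈ aset N m, (1 + X ^ i)

open Polynomial in
theorem apoly_eq (N m : ℕ) : apoly N m = ∑ t ∈ (aset N m).powerset, X ^ (t.sum id) := by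
  rw [apoly, Finset.prod_one_add]
  exact Finset.sum_congr rfl fun t _ => by rw [Finset.prod_pow_eq_pow_sum]; rfl

theorem aset_eq (N m : ℕ) (h : m < N) : aset N m = insert (2 * m + 2) (bset N m) := by
  ext i
  simp only [aset, bset, Finset.mem_filter, Finset.mem_Icc, Finset.mem_insert, Nat.odd_iff,
    Nat.even_iff]
  omega

theorem aset_succ (N m : ℕ) (h : m < N) : aset N (m + 1) = insert (2 * m + 1) (bset N m) := by
  ext i
  simp only [aset, bset, Finset.mem_filter, Finset.mem_Icc, Finset.mem_insert, Nat.odd_iff,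
    Nat.even_iff]
  omega

open Polynomial in
theorem tele (N m : ℕ) (h : m < N) :
    (1 - X) * (X ^ (2 * m + 1) * apoly N m)
      = X * (1 + X ^ (2 * m)) * apoly N m - X * (1 + X ^ (2 * (m + 1))) * apoly N (m + 1) := by
  have e1 : apoly N m = (1 + X ^ (2 * m + 2)) * ∏ i ∈ bset N m, (1 + X ^ i) := by
    rw [apoly, aset_eq N m h, Finset.prod_insert]
    simp only [bset, Finset.mem_filter, Finset.mem_Icc, Nat.odd_iff, Nat.even_iff]
    omega
  have e2 : apoly N (m + 1) = (1 + X ^ (2 * m + 1)) * ∏ i ∈ bset N m, (1 + X ^ i) := by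
    rw [apoly, aset_succ N m h, Finset.prod_insert]
    simp only [bset, Finset.mem_filter, Finset.mem_Icc, Nat.odd_iff, Nat.even_iff]
    omega
  rw [e1, e2]
  ring

open Polynomial in
theorem tele_sum (N : ℕ) :
    (1 - X) * ∑ m ∈ Finset.range N, X ^ (2 * m + 1) * apoly N m
      = X * 2 * apoly N 0 - X * (1 + X ^ (2 * N)) * apoly N N := by
  rw [Finset.mul_sum, Finset.sum_congr rfl (fun m hm => tele N m (Finset.mem_range.1 hm)),
    Finset.sum_range_sub' (fun m => X * (1 + X ^ (2 * m)) * apoly N m)]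
  simp only [mul_zero, pow_zero]
  ring

def Qp (t : Finset ℕ) : Prop :=
  (∀ a ∈ t, ∀ b ∈ t, Odd a → Even b → a < b) ∧ (∃ a ∈ t, Odd a)

theorem gen_even (N : ℕ) :
    genP (Finset.Icc 1 (2 * N)) (fun t => ∀ a ∈ t, Even a) = apoly N 0 := by
  classical
  rw [apoly_eq, genP]
  congr 1
  ext t
  simp only [Finset.mem_filter, Finset.mem_powerset, aset, Finset.subset_iff, Finset.mem_Icc,
    Nat.odd_iff, Nat.even_iff]
  constructor
  · rintro ⟨h1, h2⟩ x hx
    have := h1 hx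
    have := h2 x hx
    omega
  · intro h
    exact ⟨fun x hx => (h hx).1, fun x hx => by have := h hx; omega⟩

theorem gen_odd (N : ℕ) :
    genP (Finset.Icc 1 (2 * N)) (fun t => ∀ a ∈ t, Odd a) = apoly N N := by
  classical
  rw [apoly_eq, genP]
  congr 1
  ext t
  simp only [Finset.mem_filter, Finset.mem_powerset, aset, Finset.subset_iff, Finset.mem_Icc,
    Nat.odd_iff, Nat.even_iff]
  constructor
  · rintro ⟨h1, h2⟩ x hx
    have := h1 hx
    have := h2 x hx
    omega
  · intro h
    exact ⟨fun x hx => (h hx).1, fun x hx => by have := h hx; omega⟩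

theorem mem_aset (N m i : ℕ) : i ∈ aset N m ↔
    (1 ≤ i ∧ i ≤ 2 * N) ∧ ((i % 2 = 1 ∧ i < 2 * m) ∨ (i % 2 = 0 ∧ 2 * m < i)) := by
  simp only [aset, Finset.mem_filter, Finset.mem_Icc, Nat.odd_iff, Nat.even_iff]

open Polynomial in
theorem gen_ped (N : ℕ) :
    genP (Finset.Icc 1 (2 * N)) Qp = ∑ m ∈ Finset.range N, X ^ (2 * m + 1) * apoly N m := by
  classical
  have hn : ∀ m, 2 * m + 1 ∉ aset N m := fun m => by rw [mem_aset]; omega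
  simp only [apoly_eq, Finset.mul_sum]
  rw [Finset.sum_sigma', genP]
  symm
  refine Finset.sum_bij (fun p _ => insert (2 * p.1 + 1) p.2) ?_ ?_ ?_ ?_
  · rintro ⟨m, u⟩ h
    simp only [Finset.mem_sigma, Finset.mem_range, Finset.mem_powerset] at h
    obtain ⟨hm, hu⟩ := h
    have hu' := fun i hi => (mem_aset N m i).1 (hu hi)
    simp only [Finset.mem_filter, Finset.mem_powerset, Qp, Nat.odd_iff, Nat.even_iff,
      Finset.subset_iff, Finset.mem_Icc, Finset.mem_insert]
    refine ⟨?_, ?_, ⟨2 * m + 1, Or.inl rfl, by omega⟩⟩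
    · rintro x (rfl | hx)
      · omega
      · exact (hu' x hx).1
    · rintro a (rfl | ha) b (rfl | hb) h1 h2
      · omega
      · have := hu' b hb; omega
      · omega
      · have := hu' b hb
        have := hu' a ha
        omega
  · rintro ⟨m, u⟩ h ⟨m', u'⟩ h' he
    simp only [Finset.mem_sigma, Finset.mem_range, Finset.mem_powerset] at h h' he
    have hmm : m = m' := by
      have h1 : 2 * m + 1 ∈ insert (2 * m' + 1) u' := he ▸ Finset.mem_insert_self _ _
      have h2 : 2 * m' + 1 ∈ insert (2 * m + 1) u := he ▸ Finset.mem_insert_self _ _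
      rw [Finset.mem_insert] at h1 h2
      rcases h1 with h1 | h1
      · omega
      rcases h2 with h2 | h2
      · omega
      have := (mem_aset _ _ _).1 (h.2 h2)
      have := (mem_aset _ _ _).1 (h'.2 h1)
      omega
    subst hmm
    have : u = u' := by
      rw [← Finset.erase_insert (fun hh => hn m (h.2 hh)), he,
        Finset.erase_insert (fun hh => hn m (h'.2 hh))]
    rw [this]
  · intro t ht
    simp only [Finset.mem_filter, Finset.mem_powerset, Qp, Nat.odd_iff, Nat.even_iff,
      Finset.subset_iff, Finset.mem_Icc] at ht
    obtain ⟨hS, hlt, a, ha, hao⟩ := ht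
    have hne : (t.filter (fun i => i % 2 = 1)).Nonempty := ⟨a, by simp [ha, hao]⟩
    obtain ⟨M, hM, hmax⟩ := Finset.exists_max_image _ id hne
    simp only [Finset.mem_filter, id] at hM hmax
    have hMS := hS hM.1
    have hMe : 2 * (M / 2) + 1 = M := by omega
    refine ⟨⟨M / 2, t.erase M⟩, ?_, ?_⟩
    · simp only [Finset.mem_sigma, Finset.mem_range, Finset.mem_powerset]
      refine ⟨by omega, fun i hi => ?_⟩
      rw [Finset.mem_erase] at hi
      rw [mem_aset]
      refine ⟨hS hi.2, ?_⟩
      rcases Nat.mod_two_eq_zero_or_one i with h | h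
      · have := hlt M hM.1 i hi.2 hM.2 h
        omega
      · have := hmax i ⟨hi.2, h⟩
        omega
    · simp only [hMe]
      exact Finset.insert_erase hM.1
  · rintro ⟨m, u⟩ h
    simp only [Finset.mem_sigma, Finset.mem_range, Finset.mem_powerset] at h
    rw [Finset.sum_insert (fun hh => hn m (h.2 hh))]
    exact (pow_add _ _ _).symm

theorem pedOd_diff (n : ℕ) (hn : 1 ≤ n) :
    (pedOd n : ℤ) - (pedOd (n - 1) : ℤ)
      = 2 * (Deven (n - 1) : ℤ) - (Dodd (n - 1) : ℤ) := by
  obtain ⟨k, rfl⟩ : ∃ k, n = k + 1 := ⟨n - 1, by omega⟩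
  rw [Nat.add_sub_cancel]
  have h0 : 0 ∉ Finset.Icc 1 (2 * (k + 1)) := by simp
  have hp : ∀ j, j ≤ k + 1 → (pedOd j : ℤ) = (genP (Finset.Icc 1 (2 * (k + 1))) Qp).coeff j := by
    intro j hj
    rw [← card_eq_coeff j _ _ h0 (fun i h1 h2 => by rw [Finset.mem_Icc]; omega)]
    simp only [pedOd, Qp, Multiset.mem_toFinset]
  have he : (Deven k : ℤ) = (apoly (k + 1) 0).coeff k := by
    rw [← gen_even, ← card_eq_coeff k _ _ h0 (fun i h1 h2 => by rw [Finset.mem_Icc]; omega)]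
    simp only [Deven, Multiset.mem_toFinset]
  have ho : (Dodd k : ℤ) = (apoly (k + 1) (k + 1)).coeff k := by
    rw [← gen_odd, ← card_eq_coeff k _ _ h0 (fun i h1 h2 => by rw [Finset.mem_Icc]; omega)]
    simp only [Dodd, Multiset.mem_toFinset]
  rw [hp _ le_rfl, hp _ (Nat.le_succ k), he, ho, gen_ped]
  have key := congrArg (fun p => Polynomial.coeff p (k + 1)) (tele_sum (k + 1))
  simp only [sub_mul, one_mul, mul_assoc, Polynomial.coeff_sub, Polynomial.coeff_X_mul, add_mul,
    Polynomial.coeff_add] at key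
  rw [Polynomial.coeff_X_pow_mul', if_neg (by omega), add_zero, Polynomial.coeff_ofNat_mul] at key
  exact_mod_cast key
end

section
/- For every integer n ≥ 1, p^{ed}_{od}(n) - p^{ed}_{od}(n-1) ≡ D_o(n-1) (mod 2). -/
open Polynomial in
/-- generating polynomial of finite subsets of `[1, M)` satisfying `Q`, over `ZMod 2` -/
noncomputable def gfQ (Q : Multiset ℕ → Prop) (M : ℕ) : Polynomial (ZMod 2) :=
  open Classical in
  ∑ T ∈ (Finset.Ico 1 M).powerset, if Q T.val then (X : Polynomial (ZMod 2)) ^ (∑ i ∈ T, i) else 0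

def goodQ (s : Multiset ℕ) : Prop :=
  (∀ a ∈ s, ∀ b ∈ s, Odd a → Even b → a < b) ∧ (∃ a ∈ s, Odd a)

def oddQ (s : Multiset ℕ) : Prop := ∀ a ∈ s, Odd a

theorem card_eq_coeff_s6 (Q : Multiset ℕ → Prop) (n M : ℕ) (h : n < M) :
    ((Nat.card {π : n.Partition // π.parts.Nodup ∧ Q π.parts} : ℕ) : ZMod 2)
      = (gfQ Q M).coeff n := by
  classical
  have e : {π : n.Partition // π.parts.Nodup ∧ Q π.parts} ≃
      {T : Finset ℕ // T ∈ (Finset.Ico 1 M).powerset.filter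
        (fun T => Q T.val ∧ n = ∑ i ∈ T, i)} :=
    { toFun := fun π => ⟨⟨π.1.parts, π.2.1⟩, by
        simp only [Finset.mem_filter, Finset.mem_powerset]
        refine ⟨?_, π.2.2, ?_⟩
        · intro a ha
          have ha' : a ∈ π.1.parts := ha
          have h1 := π.1.parts_pos ha'
          have h2 := Multiset.le_sum_of_mem ha'
          rw [π.1.parts_sum] at h2
          simp; omega
        · have := π.1.parts_sum
          simp [Finset.sum, this]⟩
      invFun := fun T => ⟨⟨T.1.val, by
          intro i hi
          have := T.2
          simp only [Finset.mem_filter, Finset.mem_powerset] at this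
          have := this.1 hi
          simp at this; omega, by
          have := T.2
          simp only [Finset.mem_filter, Finset.mem_powerset] at this
          refine Eq.trans ?_ this.2.2.symm; exact (Finset.sum_val _)⟩, T.1.nodup, by
          have := T.2
          simp only [Finset.mem_filter, Finset.mem_powerset] at this
          exact this.2.1⟩
      left_inv := fun π => rfl
      right_inv := fun T => rfl }
  rw [Nat.card_congr e, Nat.card_eq_fintype_card, Fintype.card_coe, gfQ,
    Polynomial.finsetSum_coeff, Finset.card_filter, Nat.cast_sum]
  refine Finset.sum_congr rfl fun T _ => ?_
  by_cases hQ : Q T.val <;> simp [hQ, Polynomial.coeff_X_pow]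

theorem gfQ_step (Q : Multiset ℕ → Prop) (N : ℕ) (hN : 1 ≤ N) :
    gfQ Q (2 * (N + 1)) = open Classical in
      ∑ T ∈ (Finset.Ico 1 (2 * N)).powerset,
        ((if Q T.val then (Polynomial.X : Polynomial (ZMod 2)) ^ (∑ i ∈ T, i) else 0)
        + (if Q (insert (2 * N) T).val then Polynomial.X ^ (∑ i ∈ T, i) * Polynomial.X ^ (2 * N) else 0)
        + (if Q (insert (2 * N + 1) T).val then
            Polynomial.X ^ (∑ i ∈ T, i) * Polynomial.X ^ (2 * N + 1) else 0)
        + (if Q (insert (2 * N + 1) (insert (2 * N) T)).val then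
            Polynomial.X ^ (∑ i ∈ T, i) * Polynomial.X ^ (2 * N + (2 * N + 1)) else 0)) := by
  classical
  have h1 : Finset.Ico 1 (2 * (N + 1)) =
      insert (2 * N + 1) (insert (2 * N) (Finset.Ico 1 (2 * N))) := by
    ext a; simp; omega
  rw [gfQ, h1, Finset.sum_powerset_insert (by simp), Finset.sum_powerset_insert (by simp),
    Finset.sum_powerset_insert (by simp), ← Finset.sum_add_distrib, ← Finset.sum_add_distrib,
    ← Finset.sum_add_distrib]
  refine Finset.sum_congr rfl fun T hT => ?_
  have hT' := Finset.mem_powerset.1 hT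
  have a1 : 2 * N ∉ T := fun h => by simpa using hT' h
  have a2 : 2 * N + 1 ∉ T := fun h => by simpa using hT' h
  have a3 : 2 * N + 1 ∉ insert (2 * N) T := by simp [a2]
  rw [Finset.sum_insert a3, Finset.sum_insert a1, Finset.sum_insert a2]
  simp only [← pow_add]
  rw [show 2 * N + ∑ i ∈ T, i = ∑ i ∈ T, i + 2 * N by ring,
    show 2 * N + 1 + ∑ i ∈ T, i = ∑ i ∈ T, i + (2 * N + 1) by ring,
    show 2 * N + 1 + (∑ i ∈ T, i + 2 * N) = ∑ i ∈ T, i + (2 * N + (2 * N + 1)) by ring]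
  ring

theorem odd_step (N : ℕ) (hN : 1 ≤ N) :
    gfQ oddQ (2 * (N + 1)) = gfQ oddQ (2 * N) * (1 + Polynomial.X ^ (2 * N + 1)) := by
  classical
  rw [gfQ_step _ _ hN, gfQ, Finset.sum_mul]
  refine Finset.sum_congr rfl fun T hT => ?_
  have b1 : ¬ oddQ (insert (2 * N) T).val := by
    intro h
    have := h (2 * N) (by simp)
    exact absurd this (by simp)
  have b2 : ¬ oddQ (insert (2 * N + 1) (insert (2 * N) T)).val := by
    intro h
    have := h (2 * N) (by simp)
    exact absurd this (by simp)
  have b3 : oddQ (insert (2 * N + 1) T).val ↔ oddQ T.val := by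
    simp [oddQ]
  rw [if_neg b1, if_neg b2]
  simp only [b3]
  split_ifs <;> ring

theorem good_step (N : ℕ) (hN : 1 ≤ N) :
    gfQ goodQ (2 * (N + 1)) = gfQ goodQ (2 * N) * (1 + Polynomial.X ^ (2 * N))
      + gfQ oddQ (2 * N) * Polynomial.X ^ (2 * N + 1) := by
  classical
  rw [gfQ_step _ _ hN, gfQ, gfQ, Finset.sum_mul, Finset.sum_mul, ← Finset.sum_add_distrib]
  refine Finset.sum_congr rfl fun T hT => ?_
  have hT' : ∀ a ∈ T, a < 2 * N := fun a ha => by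
    have := Finset.mem_powerset.1 hT ha
    simp at this; omega
  have b2 : ¬ goodQ (insert (2 * N + 1) (insert (2 * N) T)).val := by
    intro h
    have := h.1 (2 * N + 1) (by simp) (2 * N) (by simp) (by simp) (by simp)
    omega
  have b1 : goodQ (insert (2 * N) T).val ↔ goodQ T.val := by
    simp only [goodQ, Finset.mem_val, Finset.mem_insert]
    constructor
    · rintro ⟨h1, a, ha | ha, h2⟩
      · subst ha; exact absurd h2 (by simp)
      · exact ⟨fun a ha b hb => h1 a (.inr ha) b (.inr hb), a, ha, h2⟩
    · rintro ⟨h1, a, ha, h2⟩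
      refine ⟨?_, a, .inr ha, h2⟩
      rintro a (rfl | ha) b (rfl | hb) oa eb
      · exact absurd oa (by simp)
      · exact absurd oa (by simp)
      · exact hT' a ha
      · exact h1 a ha b hb oa eb
  have b3 : goodQ (insert (2 * N + 1) T).val ↔ oddQ T.val := by
    simp only [goodQ, oddQ, Finset.mem_val, Finset.mem_insert]
    constructor
    · rintro ⟨h1, -⟩ b hb
      by_contra hb'
      have := h1 (2 * N + 1) (.inl rfl) b (.inr hb) (by simp) (by simpa using hb')
      have := hT' b hb
      omega
    · intro h
      refine ⟨?_, 2 * N + 1, .inl rfl, by simp⟩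
      rintro a - b (rfl | hb) oa eb
      · simp at eb
      · exact absurd eb (by simpa using h b hb)
  rw [if_neg b2]
  simp only [b1, b3]
  split_ifs <;> ring

theorem key (N : ℕ) (hN : 1 ≤ N) :
    (1 + Polynomial.X) * gfQ goodQ (2 * N) = Polynomial.X * gfQ oddQ (2 * N) := by
  classical
  induction N, hN using Nat.le_induction with
  | base =>
    have h : (Finset.Ico 1 (2 * 1)).powerset = {∅, {1}} := by decide
    rw [gfQ, gfQ, h, Finset.sum_pair (by decide), Finset.sum_pair (by decide)]
    simp [goodQ, oddQ]
    ring
  | succ N hN ih =>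
    have h2 : (2 : Polynomial (ZMod 2)) = 0 := CharTwo.two_eq_zero
    rw [good_step N hN, odd_step N hN]
    linear_combination (1 + Polynomial.X ^ (2 * N)) * ih +
      (Polynomial.X ^ (2 * N + 1) * gfQ oddQ (2 * N)) * h2

theorem pedOd_diff_mod_two (n : ℕ) (hn : 1 ≤ n) :
    (pedOd n : ℤ) - (pedOd (n - 1) : ℤ) ≡ (Dodd (n - 1) : ℤ) [ZMOD 2] := by
  obtain ⟨m, rfl⟩ : ∃ m, n = m + 1 := ⟨n - 1, by omega⟩
  rw [Nat.add_sub_cancel]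
  have h1 := card_eq_coeff_s6 goodQ (m + 1) (2 * (m + 1)) (by omega)
  have h2 := card_eq_coeff_s6 goodQ m (2 * (m + 1)) (by omega)
  have h3 := card_eq_coeff_s6 oddQ m (2 * (m + 1)) (by omega)
  have k := congrArg (fun p => Polynomial.coeff p (m + 1)) (key (m + 1) (by omega))
  simp only [add_mul, one_mul, Polynomial.coeff_add, Polynomial.coeff_X_mul] at k
  rw [← h1, ← h2, ← h3] at k
  have k' : (pedOd (m + 1) : ZMod 2) + (pedOd m : ZMod 2) = (Dodd m : ZMod 2) := k
  have := (ZMod.intCast_eq_intCast_iff ((pedOd (m + 1) : ℤ) - (pedOd m : ℤ)) (Dodd m : ℤ) 2).1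
    (by push_cast; rw [CharTwo.sub_eq_add]; exact k')
  exact_mod_cast this
end
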